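/- For any EUF formula F, the formula F* obtained by eliminating all applications of function and predicate symbols of nonzero order via the nested-ITE construction is universally valid if and only if F is universally valid. -/

import Mathlib

mutual
inductive EufTerm (Fn Pr : Type) : Type
  | app : Fn → List (EufTerm Fn Pr) → EufTerm Fn Pr
  | ite : EufFormula Fn Pr → EufTerm Fn Pr → EufTerm Fn Pr → EufTerm Fn Pr
inductive EufFormula (Fn Pr : Type) : Type
  | tt : EufFormula Fn Pr
  | ff : EufFormula Fn Pr
  | not : EufFormula Fn Pr → EufFormula Fn Pr
  | and : EufFormula Fn Pr → EufFormula Fn Pr → EufFormula Fn Pr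
  | or : EufFormula Fn Pr → EufFormula Fn Pr → EufFormula Fn Pr
  | eq : EufTerm Fn Pr → EufTerm Fn Pr → EufFormula Fn Pr
  | papp : Pr → List (EufTerm Fn Pr) → EufFormula Fn Pr
end

structure Interp (Fn Pr : Type) (D : Type u) where
  fn : Fn → List D → D
  pr : Pr → List D → Bool

open Classical in
mutual
noncomputable def evalT {Fn Pr : Type} {D : Type} (I : Interp Fn Pr D) : EufTerm Fn Pr → D
  | .app f args => I.fn f (args.attach.map (fun t => evalT I t.1))
  | .ite G T1 T2 => if evalF I G then evalT I T1 else evalT I T2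
termination_by t => sizeOf t
decreasing_by
  all_goals simp_wf
  all_goals try omega
  all_goals (have := List.sizeOf_lt_of_mem t.2; omega)
noncomputable def evalF {Fn Pr : Type} {D : Type} (I : Interp Fn Pr D) : EufFormula Fn Pr → Bool
  | .tt => true
  | .ff => false
  | .not G => !evalF I G
  | .and G1 G2 => evalF I G1 && evalF I G2
  | .or G1 G2 => evalF I G1 || evalF I G2
  | .eq T1 T2 => decide (evalT I T1 = evalT I T2)
  | .papp p args => I.pr p (args.attach.map (fun t => evalT I t.1))
termination_by g => sizeOf g
decreasing_by
  all_goals simp_wf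
  all_goals try omega
  all_goals (have := List.sizeOf_lt_of_mem t.2; omega)
end
def ValidOn {Fn Pr : Type} (F : EufFormula Fn Pr) (D : Type) : Prop :=
  ∀ I : Interp Fn Pr D, evalF I F = true

def UniversallyValid {Fn Pr : Type} (F : EufFormula Fn Pr) : Prop :=
  ∀ D : Type, Nonempty D → ValidOn F D

/-- Expressions: terms or formulas. -/
inductive EufExpr (Fn Pr : Type) : Type
  | t : EufTerm Fn Pr → EufExpr Fn Pr
  | f : EufFormula Fn Pr → EufExpr Fn Pr

/-- Immediate (proper) subexpression relation. -/
inductive ImmSub {Fn Pr : Type} : EufExpr Fn Pr → EufExpr Fn Pr → Prop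
  | appArg {g : Fn} {args : List (EufTerm Fn Pr)} {T : EufTerm Fn Pr} :
      T ∈ args → ImmSub (.t T) (.t (.app g args))
  | iteC {G : EufFormula Fn Pr} {T1 T2 : EufTerm Fn Pr} : ImmSub (.f G) (.t (.ite G T1 T2))
  | ite1 {G : EufFormula Fn Pr} {T1 T2 : EufTerm Fn Pr} : ImmSub (.t T1) (.t (.ite G T1 T2))
  | ite2 {G : EufFormula Fn Pr} {T1 T2 : EufTerm Fn Pr} : ImmSub (.t T2) (.t (.ite G T1 T2))
  | not {G : EufFormula Fn Pr} : ImmSub (.f G) (.f (.not G))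
  | andL {G1 G2 : EufFormula Fn Pr} : ImmSub (.f G1) (.f (.and G1 G2))
  | andR {G1 G2 : EufFormula Fn Pr} : ImmSub (.f G2) (.f (.and G1 G2))
  | orL {G1 G2 : EufFormula Fn Pr} : ImmSub (.f G1) (.f (.or G1 G2))
  | orR {G1 G2 : EufFormula Fn Pr} : ImmSub (.f G2) (.f (.or G1 G2))
  | eqL {T1 T2 : EufTerm Fn Pr} : ImmSub (.t T1) (.f (.eq T1 T2))
  | eqR {T1 T2 : EufTerm Fn Pr} : ImmSub (.t T2) (.f (.eq T1 T2))
  | pappArg {p : Pr} {args : List (EufTerm Fn Pr)} {T : EufTerm Fn Pr} :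
      T ∈ args → ImmSub (.t T) (.f (.papp p args))

/-- `SubExpr a b`: `a` occurs (as a subexpression) in `b`. -/
def SubExpr {Fn Pr : Type} (a b : EufExpr Fn Pr) : Prop := Relation.ReflTransGen ImmSub a b

def TermInT {Fn Pr : Type} (T S : EufTerm Fn Pr) : Prop := SubExpr (.t T) (.t S)
def TermInF {Fn Pr : Type} (T : EufTerm Fn Pr) (F : EufFormula Fn Pr) : Prop :=
  SubExpr (.t T) (.f F)
def FormulaInT {Fn Pr : Type} (G : EufFormula Fn Pr) (S : EufTerm Fn Pr) : Prop :=
  SubExpr (.f G) (.t S)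
def FormulaInF {Fn Pr : Type} (G F : EufFormula Fn Pr) : Prop := SubExpr (.f G) (.f F)

def IsAppTerm {Fn Pr : Type} : EufTerm Fn Pr → Prop
  | .app _ _ => True
  | _ => False

/-- `𝒯(F)`: the function application terms occurring in `F`. -/
def AppTermsF {Fn Pr : Type} (F : EufFormula Fn Pr) : Set (EufTerm Fn Pr) :=
  {T | IsAppTerm T ∧ TermInF T F}

/-- A function symbol occurs in `F` when some application of it occurs in `F`. -/
def FnInF {Fn Pr : Type} (g : Fn) (F : EufFormula Fn Pr) : Prop :=
  ∃ args, TermInF (EufTerm.app g args) F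

def PrInF {Fn Pr : Type} (p : Pr) (F : EufFormula Fn Pr) : Prop :=
  ∃ args, FormulaInF (EufFormula.papp p args) F

/-- `I` is diverse for `F` with respect to the set `Sg` of function symbols. -/
def DiverseFor {Fn Pr D : Type} (I : Interp Fn Pr D) (F : EufFormula Fn Pr)
    (Sg : Set Fn) : Prop :=
  ∀ (g : Fn) (args : List (EufTerm Fn Pr)), g ∈ Sg →
    TermInF (EufTerm.app g args) F →
    ∀ T2 ∈ AppTermsF F, evalT I (EufTerm.app g args) = evalT I T2 →
      ∃ args2, T2 = EufTerm.app g args2 ∧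
        List.Forall₂ (fun a b => evalT I a = evalT I b) args args2

mutual
/-- PEUF g-terms, where `isP` designates the p-function symbols. -/
inductive IsGTerm {Fn Pr : Type} (isP : Fn → Prop) : EufTerm Fn Pr → Prop
  | ite {G : EufFormula Fn Pr} {T1 T2 : EufTerm Fn Pr} :
      IsGFormula isP G → IsGTerm isP T1 → IsGTerm isP T2 → IsGTerm isP (.ite G T1 T2)
  | app {g : Fn} {args : List (EufTerm Fn Pr)} :
      ¬ isP g → (∀ T ∈ args, IsPTerm isP T) → IsGTerm isP (.app g args)
/-- PEUF p-terms. -/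
inductive IsPTerm {Fn Pr : Type} (isP : Fn → Prop) : EufTerm Fn Pr → Prop
  | g {T : EufTerm Fn Pr} : IsGTerm isP T → IsPTerm isP T
  | ite {G : EufFormula Fn Pr} {T1 T2 : EufTerm Fn Pr} :
      IsGFormula isP G → IsPTerm isP T1 → IsPTerm isP T2 → IsPTerm isP (.ite G T1 T2)
  | app {g : Fn} {args : List (EufTerm Fn Pr)} :
      isP g → (∀ T ∈ args, IsPTerm isP T) → IsPTerm isP (.app g args)
/-- PEUF g-formulas. -/
inductive IsGFormula {Fn Pr : Type} (isP : Fn → Prop) : EufFormula Fn Pr → Prop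
  | tt : IsGFormula isP .tt
  | ff : IsGFormula isP .ff
  | not {G : EufFormula Fn Pr} : IsGFormula isP G → IsGFormula isP (.not G)
  | and {G1 G2 : EufFormula Fn Pr} :
      IsGFormula isP G1 → IsGFormula isP G2 → IsGFormula isP (.and G1 G2)
  | or {G1 G2 : EufFormula Fn Pr} :
      IsGFormula isP G1 → IsGFormula isP G2 → IsGFormula isP (.or G1 G2)
  | eq {T1 T2 : EufTerm Fn Pr} :
      IsGTerm isP T1 → IsGTerm isP T2 → IsGFormula isP (.eq T1 T2)
  | papp {p : Pr} {args : List (EufTerm Fn Pr)} :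
      (∀ T ∈ args, IsPTerm isP T) → IsGFormula isP (.papp p args)
/-- PEUF p-formulas. -/
inductive IsPFormula {Fn Pr : Type} (isP : Fn → Prop) : EufFormula Fn Pr → Prop
  | g {G : EufFormula Fn Pr} : IsGFormula isP G → IsPFormula isP G
  | and {G1 G2 : EufFormula Fn Pr} :
      IsPFormula isP G1 → IsPFormula isP G2 → IsPFormula isP (.and G1 G2)
  | or {G1 G2 : EufFormula Fn Pr} :
      IsPFormula isP G1 → IsPFormula isP G2 → IsPFormula isP (.or G1 G2)
  | eq {T1 T2 : EufTerm Fn Pr} :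
      IsPTerm isP T1 → IsPTerm isP T2 → IsPFormula isP (.eq T1 T2)
end

/-- The p-function symbols occurring in `F`. -/
def PSymbolsIn {Fn Pr : Type} (isP : Fn → Prop) (F : EufFormula Fn Pr) : Set Fn :=
  {g | isP g ∧ FnInF g F}

/-- `I` is maximally diverse for the p-formula `F`. -/
def MaxDiverse {Fn Pr D : Type} (isP : Fn → Prop) (I : Interp Fn Pr D)
    (F : EufFormula Fn Pr) : Prop :=
  DiverseFor I F (PSymbolsIn isP F)

/-- `I'` refines `I` on the term set `Ts`. -/
def RefinesOn {Fn Pr D D' : Type} (I' : Interp Fn Pr D') (I : Interp Fn Pr D)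
    (Ts : Set (EufTerm Fn Pr)) : Prop :=
  ∀ T1 ∈ Ts, ∀ T2 ∈ Ts, evalT I' T1 = evalT I' T2 → evalT I T1 = evalT I T2

def ProperRefinesOn {Fn Pr D D' : Type} (I' : Interp Fn Pr D') (I : Interp Fn Pr D)
    (Ts : Set (EufTerm Fn Pr)) : Prop :=
  RefinesOn I' I Ts ∧
    ∃ T1 ∈ Ts, ∃ T2 ∈ Ts, evalT I T1 = evalT I T2 ∧ evalT I' T1 ≠ evalT I' T2
open Classical in
mutual
/-- Substitute the term `B` for each instance of the term `A`. -/
noncomputable def substT {Fn Pr : Type} (A B : EufTerm Fn Pr) : EufTerm Fn Pr → EufTerm Fn Pr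
  | .app g args =>
      if EufTerm.app g args = A then B
      else .app g (args.attach.map (fun t => substT A B t.1))
  | .ite G T1 T2 =>
      if EufTerm.ite G T1 T2 = A then B
      else .ite (substF A B G) (substT A B T1) (substT A B T2)
termination_by t => sizeOf t
decreasing_by
  all_goals simp_wf
  all_goals try omega
  all_goals (have := List.sizeOf_lt_of_mem t.2; omega)
noncomputable def substF {Fn Pr : Type} (A B : EufTerm Fn Pr) : EufFormula Fn Pr → EufFormula Fn Pr
  | .tt => .tt
  | .ff => .ff
  | .not G => .not (substF A B G)
  | .and G1 G2 => .and (substF A B G1) (substF A B G2)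
  | .or G1 G2 => .or (substF A B G1) (substF A B G2)
  | .eq T1 T2 => .eq (substT A B T1) (substT A B T2)
  | .papp p args => .papp p (args.attach.map (fun t => substT A B t.1))
termination_by g => sizeOf g
decreasing_by
  all_goals simp_wf
  all_goals try omega
  all_goals (have := List.sizeOf_lt_of_mem t.2; omega)
end

open Classical in
mutual
/-- Substitute the formula `B` for each instance of the formula `A` inside a term. -/
noncomputable def fsubstT {Fn Pr : Type} (A B : EufFormula Fn Pr) : EufTerm Fn Pr → EufTerm Fn Pr
  | .app g args => .app g (args.attach.map (fun t => fsubstT A B t.1))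
  | .ite G T1 T2 => .ite (fsubstF A B G) (fsubstT A B T1) (fsubstT A B T2)
termination_by t => sizeOf t
decreasing_by
  all_goals simp_wf
  all_goals try omega
  all_goals (have := List.sizeOf_lt_of_mem t.2; omega)
/-- Substitute the formula `B` for each instance of the formula `A`. -/
noncomputable def fsubstF {Fn Pr : Type} (A B : EufFormula Fn Pr) : EufFormula Fn Pr → EufFormula Fn Pr
  | .tt => if EufFormula.tt = A then B else .tt
  | .ff => if EufFormula.ff = A then B else .ff
  | .not G => if EufFormula.not G = A then B else .not (fsubstF A B G)
  | .and G1 G2 => if EufFormula.and G1 G2 = A then B else .and (fsubstF A B G1) (fsubstF A B G2)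
  | .or G1 G2 => if EufFormula.or G1 G2 = A then B else .or (fsubstF A B G1) (fsubstF A B G2)
  | .eq T1 T2 => if EufFormula.eq T1 T2 = A then B else .eq (fsubstT A B T1) (fsubstT A B T2)
  | .papp p args =>
      if EufFormula.papp p args = A then B
      else .papp p (args.attach.map (fun t => fsubstT A B t.1))
termination_by g => sizeOf g
decreasing_by
  all_goals simp_wf
  all_goals try omega
  all_goals (have := List.sizeOf_lt_of_mem t.2; omega)
end
/-- The formula `C_{i,j}`: conjunction of the equations between transformed arguments. -/
def Cform {Fn Pr : Type} (hatS : ℕ → ℕ → EufTerm Fn Pr) (k i j : ℕ) : EufFormula Fn Pr :=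
  ((List.range' 1 k).map (fun l => EufFormula.eq (hatS i l) (hatS j l))).foldr .and .tt

/-- The nested-ITE term `V_{i,j}`. -/
def Vterm {Fn Pr : Type} (vf : ℕ → Fn) (hatS : ℕ → ℕ → EufTerm Fn Pr) (k i : ℕ) :
    ℕ → EufTerm Fn Pr
  | j =>
    if h : j < i then
      .ite (Cform hatS k i j) (.app (vf j) []) (Vterm vf hatS k i (j+1))
    else .app (vf i) []
termination_by j => i - j
decreasing_by omega

/-- The nested-ITE term `U_i` replacing the i-th f-application. -/
def Uterm {Fn Pr : Type} (vf : ℕ → Fn) (hatS : ℕ → ℕ → EufTerm Fn Pr) (k i : ℕ) :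
    EufTerm Fn Pr :=
  Vterm vf hatS k i 1

/-- `stepT … i E = E⁽ⁱ⁾` for terms. -/
noncomputable def stepT {Fn Pr : Type} (Ts : ℕ → EufTerm Fn Pr) (vf : ℕ → Fn)
    (hatS : ℕ → ℕ → EufTerm Fn Pr) (k : ℕ) : ℕ → EufTerm Fn Pr → EufTerm Fn Pr
  | 0, E => E
  | i+1, E =>
      substT (stepT Ts vf hatS k i (Ts (i+1))) (Uterm vf hatS k (i+1)) (stepT Ts vf hatS k i E)

/-- `stepF … i E = E⁽ⁱ⁾` for formulas. -/
noncomputable def stepF {Fn Pr : Type} (Ts : ℕ → EufTerm Fn Pr) (vf : ℕ → Fn)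
    (hatS : ℕ → ℕ → EufTerm Fn Pr) (k : ℕ) : ℕ → EufFormula Fn Pr → EufFormula Fn Pr
  | 0, E => E
  | i+1, E =>
      substF (stepT Ts vf hatS k i (Ts (i+1))) (Uterm vf hatS k (i+1)) (stepF Ts vf hatS k i E)

/-- The f-order of a term: the largest index `i ∈ [1,n]` with `Ts i` occurring in `E`. -/
noncomputable def fordT {Fn Pr : Type} (n : ℕ) (Ts : ℕ → EufTerm Fn Pr)
    (E : EufTerm Fn Pr) : ℕ :=
  sSup {i | 1 ≤ i ∧ i ≤ n ∧ TermInT (Ts i) E}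

/-- The f-order of a formula. -/
noncomputable def fordF {Fn Pr : Type} (n : ℕ) (Ts : ℕ → EufTerm Fn Pr)
    (E : EufFormula Fn Pr) : ℕ :=
  sSup {i | 1 ≤ i ∧ i ≤ n ∧ TermInF (Ts i) E}

/-- `Ê` for terms: `E⁽ᵐ⁾` where `m` is the f-order of `E`. -/
noncomputable def hatT {Fn Pr : Type} (n : ℕ) (Ts : ℕ → EufTerm Fn Pr) (vf : ℕ → Fn)
    (hatS : ℕ → ℕ → EufTerm Fn Pr) (k : ℕ) (E : EufTerm Fn Pr) : EufTerm Fn Pr :=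
  stepT Ts vf hatS k (fordT n Ts E) E

/-- `Ê` for formulas. -/
noncomputable def hatF {Fn Pr : Type} (n : ℕ) (Ts : ℕ → EufTerm Fn Pr) (vf : ℕ → Fn)
    (hatS : ℕ → ℕ → EufTerm Fn Pr) (k : ℕ) (E : EufFormula Fn Pr) : EufFormula Fn Pr :=
  stepF Ts vf hatS k (fordF n Ts E) E

/-- Hypotheses of the nested-ITE elimination of the function symbol `f` from `G`:
`Ts 1, …, Ts n` are the syntactically distinct f-application terms of `G` (ordered so that
subterms precede superterms) with argument terms `S i 1, …, S i k`; the `vf i` are fresh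
domain variables; and `hatS i l` is the transformed argument term `Ŝ_{i,l}`. -/
structure ElimHyps {Fn Pr : Type} (G : EufFormula Fn Pr) (f : Fn) (k n : ℕ)
    (Ts : ℕ → EufTerm Fn Pr) (S : ℕ → ℕ → EufTerm Fn Pr) (vf : ℕ → Fn)
    (hatS : ℕ → ℕ → EufTerm Fn Pr) : Prop where
  k_pos : 1 ≤ k
  ts_app : ∀ i, 1 ≤ i → i ≤ n → Ts i = EufTerm.app f ((List.range' 1 k).map (S i))
  ts_occurs : ∀ i, 1 ≤ i → i ≤ n → TermInF (Ts i) G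
  ts_distinct : ∀ i j, 1 ≤ i → i ≤ n → 1 ≤ j → j ≤ n → Ts i = Ts j → i = j
  ts_complete : ∀ args, TermInF (EufTerm.app f args) G →
      ∃ i, 1 ≤ i ∧ i ≤ n ∧ EufTerm.app f args = Ts i
  ts_order : ∀ i j, 1 ≤ i → i ≤ n → 1 ≤ j → j ≤ n → TermInT (Ts i) (Ts j) → i ≠ j → i < j
  vf_fresh : ∀ i, 1 ≤ i → i ≤ n → ¬ FnInF (vf i) G
  vf_inj : ∀ i j, 1 ≤ i → i ≤ n → 1 ≤ j → j ≤ n → vf i = vf j → i = j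
  vf_ne_f : ∀ i, 1 ≤ i → i ≤ n → vf i ≠ f
  hatS_spec : ∀ j l, 1 ≤ j → j ≤ n → 1 ≤ l → l ≤ k →
      hatS j l = stepT Ts vf hatS k (fordT n Ts (S j l)) (S j l)

/-- `Ĝ = G⁽ⁿ⁾`: the result of eliminating `f` from `G`. -/
noncomputable def elimResult {Fn Pr : Type} (G : EufFormula Fn Pr) (n : ℕ)
    (Ts : ℕ → EufTerm Fn Pr) (vf : ℕ → Fn) (hatS : ℕ → ℕ → EufTerm Fn Pr) (k : ℕ) :
    EufFormula Fn Pr :=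
  stepF Ts vf hatS k n G
/-- The nested-ITE-style formula `Vp_{i,j}` used when eliminating a predicate symbol. -/
def Vform {Fn Pr : Type} (vp : ℕ → Pr) (hatS : ℕ → ℕ → EufTerm Fn Pr) (k i : ℕ) :
    ℕ → EufFormula Fn Pr
  | j =>
    if h : j < i then
      .or (.and (Cform hatS k i j) (.papp (vp j) []))
          (.and (.not (Cform hatS k i j)) (Vform vp hatS k i (j+1)))
    else .papp (vp i) []
termination_by j => i - j
decreasing_by omega

/-- The formula `Up_i` replacing the i-th p-application. -/
def Uform {Fn Pr : Type} (vp : ℕ → Pr) (hatS : ℕ → ℕ → EufTerm Fn Pr) (k i : ℕ) :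
    EufFormula Fn Pr :=
  Vform vp hatS k i 1

mutual
/-- Transformation steps for predicate elimination, on terms. -/
noncomputable def pstepT {Fn Pr : Type} (Ps : ℕ → EufFormula Fn Pr) (vp : ℕ → Pr)
    (hatS : ℕ → ℕ → EufTerm Fn Pr) (k : ℕ) : ℕ → EufTerm Fn Pr → EufTerm Fn Pr
  | 0, E => E
  | i+1, E =>
      fsubstT (pstepF Ps vp hatS k i (Ps (i+1))) (Uform vp hatS k (i+1))
        (pstepT Ps vp hatS k i E)
/-- Transformation steps for predicate elimination, on formulas. -/
noncomputable def pstepF {Fn Pr : Type} (Ps : ℕ → EufFormula Fn Pr) (vp : ℕ → Pr)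
    (hatS : ℕ → ℕ → EufTerm Fn Pr) (k : ℕ) : ℕ → EufFormula Fn Pr → EufFormula Fn Pr
  | 0, E => E
  | i+1, E =>
      fsubstF (pstepF Ps vp hatS k i (Ps (i+1))) (Uform vp hatS k (i+1))
        (pstepF Ps vp hatS k i E)
end

/-- The p-order of a term. -/
noncomputable def pfordT {Fn Pr : Type} (n : ℕ) (Ps : ℕ → EufFormula Fn Pr)
    (E : EufTerm Fn Pr) : ℕ :=
  sSup {i | 1 ≤ i ∧ i ≤ n ∧ FormulaInT (Ps i) E}

/-- The p-order of a formula. -/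
noncomputable def pfordF {Fn Pr : Type} (n : ℕ) (Ps : ℕ → EufFormula Fn Pr)
    (E : EufFormula Fn Pr) : ℕ :=
  sSup {i | 1 ≤ i ∧ i ≤ n ∧ FormulaInF (Ps i) E}

/-- Hypotheses of the analogous elimination of a predicate symbol `p` of nonzero order
from `G`, using fresh propositional variables `vp i`. -/
structure PrElimHyps {Fn Pr : Type} (G : EufFormula Fn Pr) (p : Pr) (k n : ℕ)
    (Ps : ℕ → EufFormula Fn Pr) (S : ℕ → ℕ → EufTerm Fn Pr) (vp : ℕ → Pr)
    (hatS : ℕ → ℕ → EufTerm Fn Pr) : Prop where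
  k_pos : 1 ≤ k
  ps_app : ∀ i, 1 ≤ i → i ≤ n → Ps i = EufFormula.papp p ((List.range' 1 k).map (S i))
  ps_occurs : ∀ i, 1 ≤ i → i ≤ n → FormulaInF (Ps i) G
  ps_distinct : ∀ i j, 1 ≤ i → i ≤ n → 1 ≤ j → j ≤ n → Ps i = Ps j → i = j
  ps_complete : ∀ args, FormulaInF (EufFormula.papp p args) G →
      ∃ i, 1 ≤ i ∧ i ≤ n ∧ EufFormula.papp p args = Ps i
  ps_order : ∀ i j, 1 ≤ i → i ≤ n → 1 ≤ j → j ≤ n → FormulaInF (Ps i) (Ps j) → i ≠ j → i < j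
  vp_fresh : ∀ i, 1 ≤ i → i ≤ n → ¬ PrInF (vp i) G
  vp_inj : ∀ i j, 1 ≤ i → i ≤ n → 1 ≤ j → j ≤ n → vp i = vp j → i = j
  vp_ne_p : ∀ i, 1 ≤ i → i ≤ n → vp i ≠ p
  hatS_spec : ∀ j l, 1 ≤ j → j ≤ n → 1 ≤ l → l ≤ k →
      hatS j l = pstepT Ps vp hatS k (pfordT n Ps (S j l)) (S j l)

/-- One elimination step, tracking the set of fresh domain variables introduced for
p-function symbols (`isP` designates the p-function symbols of the original formula). -/
inductive ElimStep {Fn Pr : Type} (isP : Fn → Prop) :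
    EufFormula Fn Pr × Set Fn → EufFormula Fn Pr × Set Fn → Prop
  | fnP {G : EufFormula Fn Pr} {V : Set Fn} {f : Fn} {k n : ℕ}
      {Ts : ℕ → EufTerm Fn Pr} {S : ℕ → ℕ → EufTerm Fn Pr} {vf : ℕ → Fn}
      {hatS : ℕ → ℕ → EufTerm Fn Pr} :
      ElimHyps G f k n Ts S vf hatS → isP f →
      ElimStep isP (G, V)
        (elimResult G n Ts vf hatS k, V ∪ {g | ∃ i, 1 ≤ i ∧ i ≤ n ∧ g = vf i})
  | fnG {G : EufFormula Fn Pr} {V : Set Fn} {f : Fn} {k n : ℕ}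
      {Ts : ℕ → EufTerm Fn Pr} {S : ℕ → ℕ → EufTerm Fn Pr} {vf : ℕ → Fn}
      {hatS : ℕ → ℕ → EufTerm Fn Pr} :
      ElimHyps G f k n Ts S vf hatS → ¬ isP f →
      ElimStep isP (G, V) (elimResult G n Ts vf hatS k, V)
  | pr {G : EufFormula Fn Pr} {V : Set Fn} {p : Pr} {k n : ℕ}
      {Ps : ℕ → EufFormula Fn Pr} {S : ℕ → ℕ → EufTerm Fn Pr} {vp : ℕ → Pr}
      {hatS : ℕ → ℕ → EufTerm Fn Pr} :
      PrElimHyps G p k n Ps S vp hatS →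
      ElimStep isP (G, V) (pstepF Ps vp hatS k n G, V)

/-- A formula containing only domain variables and propositional variables. -/
def OnlyVarsF {Fn Pr : Type} (F : EufFormula Fn Pr) : Prop :=
  (∀ (g : Fn) (args : List (EufTerm Fn Pr)), TermInF (EufTerm.app g args) F → args = []) ∧
  (∀ (p : Pr) (args : List (EufTerm Fn Pr)), FormulaInF (EufFormula.papp p args) F → args = [])

/-- `F*` is obtained from `F` by repeatedly eliminating all function and predicate symbols
of nonzero order; `V` collects the fresh domain variables introduced for p-function
applications. -/
def ElimTo {Fn Pr : Type} (isP : Fn → Prop) (F Fstar : EufFormula Fn Pr)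
    (V : Set Fn) : Prop :=
  Relation.ReflTransGen (ElimStep isP) (F, ∅) (Fstar, V) ∧ OnlyVarsF Fstar

/-- The domain variables occurring in a formula. -/
def DomVarsF {Fn Pr : Type} (F : EufFormula Fn Pr) : Set Fn :=
  {g | TermInF (EufTerm.app g []) F}

/-- `Σ*_p(F)`: the domain variables of `F` that are p-function symbols, together with the
fresh domain variables introduced while eliminating p-function applications. -/
def SigmaStarP {Fn Pr : Type} (isP : Fn → Prop) (F : EufFormula Fn Pr) (V : Set Fn) :
    Set Fn :=
  {g | isP g ∧ TermInF (EufTerm.app g []) F} ∪ V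

/-- `Σ*_g(F)`: the remaining domain variables of `F*`. -/
def SigmaStarG {Fn Pr : Type} (isP : Fn → Prop) (F Fstar : EufFormula Fn Pr)
    (V : Set Fn) : Set Fn :=
  DomVarsF Fstar \ SigmaStarP isP F V

/-- An interpretation of `F*` is diverse over the variable set `Vp` when it assigns to each
variable of `Vp` a value distinct from the values of all other domain variables of `F*`. -/
def DiverseOver {Fn Pr D : Type} (I : Interp Fn Pr D) (Fstar : EufFormula Fn Pr)
    (Vp : Set Fn) : Prop :=
  ∀ v ∈ Vp, TermInF (EufTerm.app v []) Fstar →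
    ∀ w, TermInF (EufTerm.app w []) Fstar → w ≠ v → I.fn v [] ≠ I.fn w []

/-!
Given an interpretation of `F`, interpret the fresh variable `v i` as the value of the `i`-th
application of `f`; given one of the transformed formula, interpret `f` by looking its argument
values up among those of the transformed applications and returning `v i` for the first match `i`.
In both cases the nested ITE built for the `i`-th application evaluates to the value of that
application, because it too returns `v j` for the first `j` whose arguments agree with those of the
`i`-th. Replacing one by the other therefore preserves the value of the formula. The second
construction must not disturb the transformed formula, for which `f` must not occur in it.

Functions and predicates are treated at once, over expressions of either sort with values in
`D ⊕ Bool` and symbols in `Fn ⊕ Pr`.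
-/

variable {Fn Pr D : Type}

namespace Interp

/-- The interpretation of function and predicate symbols as a single map, with values in the
disjoint union of the domain and the truth values. -/
def sym (I : Interp Fn Pr D) : Fn ⊕ Pr → List D → D ⊕ Bool
  | .inl g, xs => .inl (I.fn g xs)
  | .inr p, xs => .inr (I.pr p xs)

theorem isLeft_sym (I : Interp Fn Pr D) (σ : Fn ⊕ Pr) (xs : List D) :
    (I.sym σ xs).isLeft = σ.isLeft := by
  cases σ <;> rfl

theorem exists_sym_eq (φ : Fn ⊕ Pr → List D → D ⊕ Bool)
    (hφ : ∀ σ xs, (φ σ xs).isLeft = σ.isLeft) :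
    ∃ I : Interp Fn Pr D, ∀ σ xs, I.sym σ xs = φ σ xs := by
  have hright (p : Pr) (xs : List D) : (φ (.inr p) xs).isRight = true := by
    simpa using hφ (.inr p) xs
  refine ⟨⟨fun g xs => (φ (.inl g) xs).getLeft (hφ _ xs),
    fun p xs => (φ (.inr p) xs).getRight (hright p xs)⟩, fun σ xs => ?_⟩
  cases σ with
  | inl g => exact Sum.inl_getLeft _ _
  | inr p => exact Sum.inr_getRight _ _

end Interp

namespace EufExpr

/-- The root of an expression: the applied symbol, or the logical connective. -/
inductive Head (Fn Pr : Type) : Type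
  | sym : Fn ⊕ Pr → Head Fn Pr
  | ite : Head Fn Pr
  | tt : Head Fn Pr
  | ff : Head Fn Pr
  | not : Head Fn Pr
  | and : Head Fn Pr
  | or : Head Fn Pr
  | eq : Head Fn Pr

/-- The root of an expression. Together with `children` it determines the expression. -/
def head : EufExpr Fn Pr → Head Fn Pr
  | .t (.app g _) => .sym (.inl g)
  | .t (.ite _ _ _) => .ite
  | .f .tt => .tt
  | .f .ff => .ff
  | .f (.not _) => .not
  | .f (.and _ _) => .and
  | .f (.or _ _) => .or
  | .f (.eq _ _) => .eq
  | .f (.papp p _) => .sym (.inr p)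

/-- The immediate subexpressions of an expression, from left to right. -/
def children : EufExpr Fn Pr → List (EufExpr Fn Pr)
  | .t (.app _ args) => args.map .t
  | .t (.ite G T₁ T₂) => [.f G, .t T₁, .t T₂]
  | .f .tt => []
  | .f .ff => []
  | .f (.not G) => [.f G]
  | .f (.and G₁ G₂) => [.f G₁, .f G₂]
  | .f (.or G₁ G₂) => [.f G₁, .f G₂]
  | .f (.eq T₁ T₂) => [.t T₁, .t T₂]
  | .f (.papp _ args) => args.map .t

/-- The application of a function or predicate symbol. -/
def app : Fn ⊕ Pr → List (EufTerm Fn Pr) → EufExpr Fn Pr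
  | .inl g, args => .t (.app g args)
  | .inr p, args => .f (.papp p args)

/-- The action on expressions of a transformation of terms and one of formulas. -/
def map (φ : EufTerm Fn Pr → EufTerm Fn Pr) (ψ : EufFormula Fn Pr → EufFormula Fn Pr) :
    EufExpr Fn Pr → EufExpr Fn Pr
  | .t T => .t (φ T)
  | .f G => .f (ψ G)

/-- The valuation `I[E]` of terms and formulas as a single map. -/
noncomputable def eval (I : Interp Fn Pr D) : EufExpr Fn Pr → D ⊕ Bool
  | .t T => .inl (evalT I T)
  | .f G => .inr (evalF I G)

@[simp]
theorem head_app (σ : Fn ⊕ Pr) (args : List (EufTerm Fn Pr)) : (app σ args).head = .sym σ := by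
  cases σ <;> rfl

@[simp]
theorem children_app (σ : Fn ⊕ Pr) (args : List (EufTerm Fn Pr)) :
    (app σ args).children = args.map .t := by
  cases σ <;> rfl

theorem head_eq_sym_iff {e : EufExpr Fn Pr} {σ : Fn ⊕ Pr} :
    e.head = .sym σ ↔ ∃ args, e = app σ args := by
  constructor
  · rcases e with (_ | _) | (_ | _) <;>
      simp only [head, reduceCtorEq, false_implies, Head.sym.injEq] <;>
      rintro rfl <;> exact ⟨_, rfl⟩
  · rintro ⟨args, rfl⟩
    exact head_app σ args

theorem immSub_iff_mem_children {c e : EufExpr Fn Pr} : ImmSub c e ↔ c ∈ e.children := by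
  constructor
  · rintro ⟨⟩ <;> simp [children, *]
  · rcases e with (_ | _) | (_ | _) <;>
      simp only [children, List.mem_map, List.mem_cons, List.not_mem_nil, or_false, false_implies]
    case t.app | f.papp => rintro ⟨T, hT, rfl⟩; constructor; exact hT
    all_goals rintro (rfl | rfl | rfl) <;> constructor

theorem sizeOf_lt_of_immSub {c e : EufExpr Fn Pr} (h : ImmSub c e) : sizeOf c < sizeOf e := by
  cases h with
  | appArg hT | pappArg hT =>
    have := List.sizeOf_lt_of_mem hT
    simp only [EufExpr.t.sizeOf_spec, EufExpr.f.sizeOf_spec, EufTerm.app.sizeOf_spec,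
      EufFormula.papp.sizeOf_spec]
    omega
  | _ => simp +arith

theorem wellFounded_immSub : WellFounded (ImmSub : EufExpr Fn Pr → EufExpr Fn Pr → Prop) :=
  Subrelation.wf sizeOf_lt_of_immSub (measure sizeOf).wf

theorem not_subExpr_of_immSub {c e : EufExpr Fn Pr} (h : ImmSub c e) : ¬ SubExpr e c := fun h' =>
  wellFounded_immSub.transGen.irrefl.irrefl e (.tail' h' h)

theorem subExpr_iff {a e : EufExpr Fn Pr} :
    SubExpr a e ↔ a = e ∨ ∃ c ∈ e.children, SubExpr a c := by
  simp only [← immSub_iff_mem_children]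
  exact Relation.ReflTransGen.cases_tail_iff _ _ _ |>.trans
    (or_congr eq_comm (exists_congr fun _ => and_comm))

/-! ### Evaluation -/

theorem eval_app (I : Interp Fn Pr D) (σ : Fn ⊕ Pr) (args : List (EufTerm Fn Pr)) :
    (app σ args).eval I = I.sym σ (args.map (evalT I)) := by
  cases σ <;> simp [app, eval, evalT, evalF, Interp.sym]

theorem map_eval_map_t (I : Interp Fn Pr D) (args : List (EufTerm Fn Pr)) :
    (args.map .t).map (eval I) = (args.map (evalT I)).map .inl := by
  simp [eval]

theorem eval_congr {I J : Interp Fn Pr D} {e e' : EufExpr Fn Pr} (hhead : e.head = e'.head)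
    (hsym : ∀ σ, e.head = .sym σ → I.sym σ = J.sym σ)
    (hchildren : e.children.map (eval I) = e'.children.map (eval J)) : e.eval I = e'.eval J := by
  by_cases happ : ∃ σ, e.head = .sym σ
  · obtain ⟨σ, hσ⟩ := happ
    obtain ⟨args, rfl⟩ := head_eq_sym_iff.1 hσ
    obtain ⟨args', rfl⟩ := head_eq_sym_iff.1 (hhead ▸ hσ)
    rw [children_app, children_app, map_eval_map_t, map_eval_map_t] at hchildren
    rw [eval_app, eval_app, hsym σ hσ, List.map_injective_iff.2 Sum.inl_injective hchildren]
  · rcases e with (_ | _) | (_ | _) <;> rcases e' with (_ | _) | (_ | _) <;>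
      simp_all [head, children, eval, evalT, evalF]

/-! ### Occurrences and replacement -/

/-- The symbol `σ` occurs in `e`: some application of it is a subexpression. This is `FnInF` and
`PrInF` for symbols and expressions of either sort. -/
def Occurs (σ : Fn ⊕ Pr) (e : EufExpr Fn Pr) : Prop := ∃ args, SubExpr (app σ args) e

theorem Occurs.mono {σ : Fn ⊕ Pr} {a e : EufExpr Fn Pr} (h : Occurs σ a) (hae : SubExpr a e) :
    Occurs σ e :=
  h.imp fun _ ha => Relation.ReflTransGen.trans ha hae

theorem occurs_iff {σ : Fn ⊕ Pr} (e : EufExpr Fn Pr) :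
    Occurs σ e ↔ e.head = .sym σ ∨ ∃ c ∈ e.children, Occurs σ c := by
  simp only [Occurs, subExpr_iff (e := e), head_eq_sym_iff, exists_or, eq_comm (a := e)]
  rw [exists_comm]
  simp only [exists_and_left]

theorem eval_eq_of_occurs {I J : Interp Fn Pr D} (e : EufExpr Fn Pr)
    (h : ∀ σ, Occurs σ e → I.sym σ = J.sym σ) : e.eval I = e.eval J := by
  induction e using wellFounded_immSub.induction with
  | _ e ih =>
    refine eval_congr rfl (fun σ hσ => h σ ((occurs_iff e).2 (.inl hσ))) ?_
    refine List.map_congr_left fun c hc => ?_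
    exact ih c (immSub_iff_mem_children.2 hc) fun σ hσ =>
      h σ ((occurs_iff e).2 (.inr ⟨c, hc, hσ⟩))

/-- `s` replaces each instance of `A` by `B`: these equations determine the simultaneous
substitution, and hold for both `substT`/`substF` and `fsubstT`/`fsubstF`. -/
structure IsReplacement (A B : EufExpr Fn Pr) (s : EufExpr Fn Pr → EufExpr Fn Pr) : Prop where
  self_eq : s A = B
  head_eq : ∀ e, e ≠ A → (s e).head = e.head
  children_eq : ∀ e, e ≠ A → (s e).children = e.children.map s

theorem isReplacement_substT (A B : EufTerm Fn Pr) :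
    IsReplacement (.t A) (.t B) (map (substT A B) (substF A B)) where
  self_eq := by cases A <;> simp [map, substT]
  head_eq e he := by rcases e with (_ | _) | (_ | _) <;> simp_all [map, substT, substF, head]
  children_eq e he := by
    rcases e with (_ | _) | (_ | _) <;> simp_all [map, substT, substF, children]

theorem isReplacement_fsubstF (A B : EufFormula Fn Pr) :
    IsReplacement (.f A) (.f B) (map (fsubstT A B) (fsubstF A B)) where
  self_eq := by cases A <;> simp [map, fsubstF]
  head_eq e he := by rcases e with (_ | _) | (_ | _) <;> simp_all [map, fsubstT, fsubstF, head]
  children_eq e he := by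
    rcases e with (_ | _) | (_ | _) <;> simp_all [map, fsubstT, fsubstF, children]

namespace IsReplacement

variable {A B : EufExpr Fn Pr} {s : EufExpr Fn Pr → EufExpr Fn Pr}

theorem eval_eq (hs : IsReplacement A B s) {I : Interp Fn Pr D} (hAB : B.eval I = A.eval I)
    (e : EufExpr Fn Pr) : (s e).eval I = e.eval I := by
  induction e using wellFounded_immSub.induction with
  | _ e ih =>
    by_cases he : e = A
    · rw [he, hs.self_eq, hAB]
    · refine eval_congr (hs.head_eq e he) (fun _ _ => rfl) ?_
      rw [hs.children_eq e he, List.map_map]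
      exact List.map_congr_left fun c hc => ih c (immSub_iff_mem_children.2 hc)

theorem subExpr_or_exists_eq (hs : IsReplacement A B s) {a e : EufExpr Fn Pr}
    (h : SubExpr a (s e)) : SubExpr a B ∨ ∃ c, c ≠ A ∧ SubExpr c e ∧ a = s c := by
  induction e using wellFounded_immSub.induction with
  | _ e ih =>
    by_cases he : e = A
    · rw [he, hs.self_eq] at h
      exact .inl h
    rw [subExpr_iff, hs.children_eq e he] at h
    rcases h with rfl | ⟨_, hmem, hac⟩
    · exact .inr ⟨e, he, .refl, rfl⟩
    · obtain ⟨c, hc, rfl⟩ := List.mem_map.1 hmem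
      have hce : ImmSub c e := immSub_iff_mem_children.2 hc
      exact (ih c hce hac).imp_right fun ⟨d, hdA, hdc, had⟩ => ⟨d, hdA, hdc.tail hce, had⟩

theorem exists_app_of_subExpr (hs : IsReplacement A B s) {σ : Fn ⊕ Pr} (hB : ¬ Occurs σ B)
    {args : List (EufTerm Fn Pr)} {e : EufExpr Fn Pr} (h : SubExpr (app σ args) (s e)) :
    ∃ args', app σ args' ≠ A ∧ SubExpr (app σ args') e ∧ app σ args = s (app σ args') := by
  rcases hs.subExpr_or_exists_eq h with h | ⟨c, hcA, hce, hc⟩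
  · exact absurd ⟨args, h⟩ hB
  · have hhead : c.head = .sym σ := by rw [← hs.head_eq c hcA, ← hc, head_app]
    obtain ⟨args', rfl⟩ := head_eq_sym_iff.1 hhead
    exact ⟨args', hcA, hce, hc⟩

end IsReplacement

/-- `e` means `ITE(C, a, b)` and is built from `C`, `a` and `b` using connectives only. -/
structure IsConditional (C : EufFormula Fn Pr) (a b e : EufExpr Fn Pr) : Prop where
  eval_eq : ∀ {D : Type} (I : Interp Fn Pr D),
    e.eval I = if evalF I C then a.eval I else b.eval I
  occurs : ∀ {σ : Fn ⊕ Pr}, Occurs σ e → Occurs σ (.f C) ∨ Occurs σ a ∨ Occurs σ b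

theorem isConditional_ite (C : EufFormula Fn Pr) (T₁ T₂ : EufTerm Fn Pr) :
    IsConditional C (.t T₁) (.t T₂) (.t (.ite C T₁ T₂)) where
  eval_eq I := by by_cases h : evalF I C <;> simp [eval, evalT, h]
  occurs h := by simpa [occurs_iff (.t (.ite _ _ _)), head, children] using h

theorem isConditional_or (C P Q : EufFormula Fn Pr) :
    IsConditional C (.f P) (.f Q) (.f (.or (.and C P) (.and (.not C) Q))) where
  eval_eq I := by by_cases h : evalF I C <;> simp [eval, evalF, h]
  occurs h := by
    simp only [occurs_iff (.f (.or _ _)), occurs_iff (.f (.and _ _)), occurs_iff (.f (.not _)),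
      head, children, reduceCtorEq, List.mem_cons, List.not_mem_nil, or_false, false_or,
      exists_eq_or_imp, exists_eq_left] at h
    tauto

/-- The largest `i` in `[1, n]` such that `σ` applied to `args i` occurs in `e`, or `0` if there is
none: the common form of `fordT` and `pfordT`. -/
noncomputable def appOrder (σ : Fn ⊕ Pr) (args : ℕ → List (EufTerm Fn Pr)) (n : ℕ)
    (e : EufExpr Fn Pr) : ℕ :=
  sSup {i | i ∈ Set.Icc 1 n ∧ SubExpr (app σ (args i)) e}

section appOrder

variable {σ : Fn ⊕ Pr} {args : ℕ → List (EufTerm Fn Pr)} {n i : ℕ} {e : EufExpr Fn Pr}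

theorem bddAbove_appOrder (σ : Fn ⊕ Pr) (args : ℕ → List (EufTerm Fn Pr)) (n : ℕ)
    (e : EufExpr Fn Pr) : BddAbove {i | i ∈ Set.Icc 1 n ∧ SubExpr (app σ (args i)) e} :=
  ⟨n, fun _ hi => hi.1.2⟩

theorem le_appOrder (hi : i ∈ Set.Icc 1 n) (h : SubExpr (app σ (args i)) e) :
    i ≤ appOrder σ args n e :=
  le_csSup (bddAbove_appOrder σ args n e) ⟨hi, h⟩

theorem appOrder_lt (hi : 1 ≤ i)
    (h : ∀ j ∈ Set.Icc 1 n, SubExpr (app σ (args j)) e → j < i) : appOrder σ args n e < i := by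
  rcases Set.eq_empty_or_nonempty {i | i ∈ Set.Icc 1 n ∧ SubExpr (app σ (args i)) e} with h₀ | h₀
  · rw [appOrder, h₀, csSup_empty]
    exact hi
  · have hmem := Nat.sSup_mem h₀ (bddAbove_appOrder σ args n e)
    exact h _ hmem.1 hmem.2

end appOrder

end EufExpr

open EufExpr

/-! ### Elimination of one symbol -/

/-- The elimination from `G` of a function or predicate symbol `σ`, applied to the argument lists
`args 1, …, args n`. The list `hatArgs i` consists of the transformed arguments, `cond i j` is
`C_{i,j}`, `V i j` is `V_{i,j}` with variables `v j`, and `step i` maps `E` to `E⁽ⁱ⁾`. The laws are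
the properties shared by the ITE terms for functions and the Boolean combinations for predicates. -/
structure Elimination (G : EufExpr Fn Pr) (σ : Fn ⊕ Pr) where
  n : ℕ
  args : ℕ → List (EufTerm Fn Pr)
  hatArgs : ℕ → List (EufTerm Fn Pr)
  v : ℕ → Fn ⊕ Pr
  cond : ℕ → ℕ → EufFormula Fn Pr
  V : ℕ → ℕ → EufExpr Fn Pr
  step : ℕ → EufExpr Fn Pr → EufExpr Fn Pr
  subExpr_app : ∀ i ∈ Set.Icc 1 n, SubExpr (app σ (args i)) G
  exists_eq_args : ∀ as, SubExpr (app σ as) G → ∃ i ∈ Set.Icc 1 n, as = args i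
  le_of_subExpr : ∀ i ∈ Set.Icc 1 n, ∀ j ∈ Set.Icc 1 n,
    SubExpr (app σ (args i)) (app σ (args j)) → i ≤ j
  not_occurs_v : ∀ i ∈ Set.Icc 1 n, ¬ Occurs (v i) G
  v_injOn : Set.InjOn v (Set.Icc 1 n)
  isLeft_v : ∀ i, (v i).isLeft = σ.isLeft
  evalF_cond : ∀ {D : Type} (I : Interp Fn Pr D) (i j : ℕ),
    evalF I (cond i j) = true ↔ (hatArgs j).map (evalT I) = (hatArgs i).map (evalT I)
  occurs_cond : ∀ {τ : Fn ⊕ Pr} {i j : ℕ}, Occurs τ (.f (cond i j)) →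
    (∃ T ∈ hatArgs i, Occurs τ (.t T)) ∨ ∃ T ∈ hatArgs j, Occurs τ (.t T)
  V_self : ∀ i, V i i = app (v i) []
  isConditional_V : ∀ i j, j < i → IsConditional (cond i j) (app (v j) []) (V i (j + 1)) (V i j)
  step_zero : ∀ e, step 0 e = e
  step_succ : ∀ i < n, ∃ s, IsReplacement (step i (app σ (args (i + 1)))) (V (i + 1) 1) s ∧
    ∀ e, step (i + 1) e = s (step i e)
  hatArgs_eq : ∀ i ∈ Set.Icc 1 n,
    (hatArgs i).map .t = (args i).map fun T => step (appOrder σ args n (.t T)) (.t T)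

theorem sInf_setOf_le_and_eq_ite (p : ℕ → Prop) [DecidablePred p] (j : ℕ) :
    sInf {m | j ≤ m ∧ p m} = if p j then j else sInf {m | j + 1 ≤ m ∧ p m} := by
  split_ifs with hj
  · exact IsLeast.csInf_eq ⟨⟨le_rfl, hj⟩, fun _ hm => hm.1⟩
  · congr 1
    ext m
    refine and_congr_left fun hm => ⟨fun hjm => Nat.lt_of_le_of_ne hjm ?_, Nat.le_of_succ_le⟩
    rintro rfl
    exact hj hm

namespace Elimination

variable {G : EufExpr Fn Pr} {σ : Fn ⊕ Pr} (E : Elimination G σ) {i : ℕ}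

theorem appOrder_arg_lt (hi : i ∈ Set.Icc 1 E.n) {T : EufTerm Fn Pr} (hT : T ∈ E.args i) :
    appOrder σ E.args E.n (.t T) < i := by
  have hTi : ImmSub (.t T) (app σ (E.args i)) := by simpa [immSub_iff_mem_children] using hT
  refine appOrder_lt hi.1 fun j hj hjT => ?_
  refine lt_of_le_of_ne (E.le_of_subExpr j hj i hi (hjT.tail hTi)) ?_
  rintro rfl
  exact not_subExpr_of_immSub hTi hjT

theorem v_ne (hi : i ∈ Set.Icc 1 E.n) : E.v i ≠ σ := fun h =>
  E.not_occurs_v i hi (by rw [h]; exact ⟨_, E.subExpr_app i hi⟩)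

theorem exists_app_of_subExpr_step (hi : i ≤ E.n) (hV : ∀ j ∈ Set.Icc 1 i, ¬ Occurs σ (E.V j 1))
    {as : List (EufTerm Fn Pr)} {e : EufExpr Fn Pr} (h : SubExpr (app σ as) (E.step i e)) :
    ∃ bs, SubExpr (app σ bs) e ∧ app σ as = E.step i (app σ bs) ∧
      ∀ j ∈ Set.Icc 1 i, bs ≠ E.args j := by
  induction i generalizing as with
  | zero =>
    rw [E.step_zero] at h
    exact ⟨as, h, (E.step_zero _).symm, fun j hj => absurd (hj.1.trans hj.2) (by simp)⟩
  | succ i ih =>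
    obtain ⟨s, hs, hstep⟩ := E.step_succ i hi
    rw [hstep] at h
    obtain ⟨cs, hcs_ne, hcs, has⟩ := hs.exists_app_of_subExpr (hV (i + 1) (by simp)) h
    obtain ⟨bs, hbs, hcs_eq, hbs_ne⟩ :=
      ih (i.le_succ.trans hi) (fun j hj => hV j ⟨hj.1, hj.2.trans i.le_succ⟩) hcs
    refine ⟨bs, hbs, by rw [has, hstep, hcs_eq], fun j hj => ?_⟩
    rcases Nat.le_succ_iff.1 hj.2 with hji | rfl
    · exact hbs_ne j ⟨hj.1, hji⟩
    · rintro rfl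
      exact hcs_ne hcs_eq

theorem occurs_V {τ : Fn ⊕ Pr} {j : ℕ} (hj : 1 ≤ j) (hji : j ≤ i) (h : Occurs τ (E.V i j)) :
    (∃ m ∈ Set.Icc 1 i, τ = E.v m) ∨ ∃ m ∈ Set.Icc 1 i, ∃ T ∈ E.hatArgs m, Occurs τ (.t T) := by
  have eq_of_occurs_v {m : ℕ} (hm : Occurs τ (app (E.v m) [])) : τ = E.v m := by
    simpa [occurs_iff (app _ _), eq_comm] using hm
  induction hji using Nat.decreasingInduction with
  | self =>
    rw [E.V_self] at h
    exact .inl ⟨i, ⟨hj, le_rfl⟩, eq_of_occurs_v h⟩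
  | of_succ j hji ih =>
    rcases (E.isConditional_V i j hji).occurs h with hC | hv | hV
    · rcases E.occurs_cond hC with hT | hT
      · exact .inr ⟨i, ⟨by omega, le_rfl⟩, hT⟩
      · exact .inr ⟨j, ⟨hj, hji.le⟩, hT⟩
    · exact .inl ⟨j, ⟨hj, hji.le⟩, eq_of_occurs_v hv⟩
    · exact ih (by omega) hV

theorem not_occurs_V (hi : i ∈ Set.Icc 1 E.n)
    (hhat : ∀ j ∈ Set.Icc 1 i, ∀ T ∈ E.hatArgs j, ¬ Occurs σ (.t T)) : ¬ Occurs σ (E.V i 1) := by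
  intro h
  rcases E.occurs_V le_rfl hi.1 h with ⟨m, hm, hσ⟩ | ⟨m, hm, T, hT, hσ⟩
  · exact E.v_ne ⟨hm.1, hm.2.trans hi.2⟩ hσ.symm
  · exact hhat m hm T hT hσ

theorem not_occurs_hatArgs (hi : i ∈ Set.Icc 1 E.n) {T : EufTerm Fn Pr} (hT : T ∈ E.hatArgs i) :
    ¬ Occurs σ (.t T) := by
  induction i using Nat.strong_induction_on generalizing T with
  | _ i ih =>
    have hmem : EufExpr.t T ∈ (E.hatArgs i).map .t := List.mem_map_of_mem hT
    rw [E.hatArgs_eq i hi, List.mem_map] at hmem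
    obtain ⟨S, hS, hST⟩ := hmem
    have hlt := E.appOrder_arg_lt hi hS
    rintro ⟨as, has⟩
    rw [← hST] at has
    have hV (j : ℕ) (hj : j ∈ Set.Icc 1 (appOrder σ E.args E.n (.t S))) :
        ¬ Occurs σ (E.V j 1) := by
      have hji : j < i := hj.2.trans_lt hlt
      exact E.not_occurs_V ⟨hj.1, hji.le.trans hi.2⟩ fun m hm _ hU =>
        have hmi : m < i := hm.2.trans_lt hji
        ih m hmi ⟨hm.1, hmi.le.trans hi.2⟩ hU
    obtain ⟨bs, hbs, -, hbs_ne⟩ := E.exists_app_of_subExpr_step (hlt.le.trans hi.2) hV has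
    have hSi : ImmSub (.t S) (app σ (E.args i)) := by simpa [immSub_iff_mem_children] using hS
    obtain ⟨j, hj, rfl⟩ := E.exists_eq_args bs ((hbs.tail hSi).trans (E.subExpr_app i hi))
    exact hbs_ne j ⟨hj.1, le_appOrder hj hbs⟩ rfl

theorem not_occurs_result : ¬ Occurs σ (E.step E.n G) := by
  rintro ⟨as, has⟩
  have hV (j : ℕ) (hj : j ∈ Set.Icc 1 E.n) : ¬ Occurs σ (E.V j 1) :=
    E.not_occurs_V hj fun _ hm _ hT => E.not_occurs_hatArgs ⟨hm.1, hm.2.trans hj.2⟩ hT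
  obtain ⟨bs, hbs, -, hbs_ne⟩ := E.exists_app_of_subExpr_step le_rfl hV has
  obtain ⟨j, hj, rfl⟩ := E.exists_eq_args bs hbs
  exact hbs_ne j hj rfl

/-- The argument values of the `i`-th transformed application. -/
noncomputable def key (I : Interp Fn Pr D) (i : ℕ) : List D :=
  (E.hatArgs i).map (evalT I)

/-- The first index whose transformed application has argument values `xs`; it is `0` when there is
none. -/
noncomputable def firstMatch (I : Interp Fn Pr D) (xs : List D) : ℕ :=
  sInf {j | 1 ≤ j ∧ E.key I j = xs}

variable {I J : Interp Fn Pr D}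

theorem firstMatch_key_mem_Icc (I : Interp Fn Pr D) (hi : 1 ≤ i) :
    E.firstMatch I (E.key I i) ∈ Set.Icc 1 i :=
  have hmem : i ∈ {j | 1 ≤ j ∧ E.key I j = E.key I i} := ⟨hi, rfl⟩
  ⟨(Nat.sInf_mem ⟨i, hmem⟩).1, Nat.sInf_le hmem⟩

theorem key_firstMatch_key (I : Interp Fn Pr D) (hi : 1 ≤ i) :
    E.key I (E.firstMatch I (E.key I i)) = E.key I i :=
  have hmem : i ∈ {j | 1 ≤ j ∧ E.key I j = E.key I i} := ⟨hi, rfl⟩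
  (Nat.sInf_mem ⟨i, hmem⟩).2

theorem firstMatch_key_le (hi : 1 ≤ i) (h : ∀ j ∈ Set.Icc 1 i, E.key I j = E.key J j) :
    E.firstMatch I (E.key I i) ≤ E.firstMatch J (E.key J i) := by
  have hmem := E.firstMatch_key_mem_Icc J hi
  refine Nat.sInf_le ⟨hmem.1, ?_⟩
  rw [h _ hmem, h i ⟨hi, le_rfl⟩, E.key_firstMatch_key J hi]

theorem firstMatch_key_congr (hi : 1 ≤ i) (h : ∀ j ∈ Set.Icc 1 i, E.key I j = E.key J j) :
    E.firstMatch I (E.key I i) = E.firstMatch J (E.key J i) :=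
  le_antisymm (E.firstMatch_key_le hi h) (E.firstMatch_key_le hi fun j hj => (h j hj).symm)

open Classical in
theorem eval_V (I : Interp Fn Pr D) {j : ℕ} (hj : j ≤ i) :
    (E.V i j).eval I = I.sym (E.v (sInf {m | j ≤ m ∧ E.key I m = E.key I i})) [] := by
  induction hj using Nat.decreasingInduction with
  | self => rw [E.V_self, eval_app, sInf_setOf_le_and_eq_ite, if_pos rfl, List.map_nil]
  | of_succ j hji ih =>
    rw [(E.isConditional_V i j hji).eval_eq, eval_app, ih, sInf_setOf_le_and_eq_ite _ j,
      List.map_nil]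
    simp only [E.evalF_cond]
    exact (apply_ite (fun m => I.sym (E.v m) []) _ _ _).symm

theorem eval_V_one (I : Interp Fn Pr D) (hi : 1 ≤ i) :
    (E.V i 1).eval I = I.sym (E.v (E.firstMatch I (E.key I i))) [] :=
  E.eval_V I hi

/-- Under `I`, each of the first `i` nested conditionals has the value of the application it
replaces. -/
def CorrectUpTo (I : Interp Fn Pr D) (i : ℕ) : Prop :=
  ∀ j ∈ Set.Icc 1 i, (E.V j 1).eval I = (app σ (E.args j)).eval I

theorem CorrectUpTo.mono {E : Elimination G σ} (h : E.CorrectUpTo I i) {j : ℕ} (hj : j ≤ i) :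
    E.CorrectUpTo I j :=
  fun m hm => h m ⟨hm.1, hm.2.trans hj⟩

theorem CorrectUpTo.eval_step {E : Elimination G σ} (h : E.CorrectUpTo I i) (hi : i ≤ E.n)
    (e : EufExpr Fn Pr) : (E.step i e).eval I = e.eval I := by
  induction i generalizing e with
  | zero => rw [E.step_zero]
  | succ i ih =>
    have ih := ih (h.mono i.le_succ) (i.le_succ.trans hi)
    obtain ⟨s, hs, hstep⟩ := E.step_succ i hi
    have hAB : (E.V (i + 1) 1).eval I = (E.step i (app σ (E.args (i + 1)))).eval I := by
      rw [ih, h (i + 1) (by simp)]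
    rw [hstep, hs.eval_eq hAB, ih]

theorem key_eq_of_correctUpTo (hi : i ∈ Set.Icc 1 E.n) (h : ∀ j < i, E.CorrectUpTo I j) :
    E.key I i = (E.args i).map (evalT I) := by
  apply List.map_injective_iff.2 Sum.inl_injective
  rw [key, ← map_eval_map_t, ← map_eval_map_t, E.hatArgs_eq i hi, List.map_map, List.map_map]
  refine List.map_congr_left fun T hT => ?_
  have hlt := E.appOrder_arg_lt hi hT
  exact (h _ hlt).eval_step (hlt.le.trans hi.2) (.t T)

theorem eval_app_args (hi : i ∈ Set.Icc 1 E.n) (h : ∀ j < i, E.CorrectUpTo I j) :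
    (app σ (E.args i)).eval I = I.sym σ (E.key I i) := by
  rw [eval_app, E.key_eq_of_correctUpTo hi h]

theorem correctUpTo_of_forall_lt
    (h : ∀ i ∈ Set.Icc 1 E.n, (∀ j < i, E.CorrectUpTo I j) →
      (E.V i 1).eval I = (app σ (E.args i)).eval I) : E.CorrectUpTo I E.n := by
  suffices ∀ i ≤ E.n, E.CorrectUpTo I i from this E.n le_rfl
  intro i hi
  induction i using Nat.strong_induction_on with
  | _ i ih =>
    intro j hj
    exact h j ⟨hj.1, hj.2.trans hi⟩ fun m hm =>
      ih m (hm.trans_le hj.2) ((hm.le.trans hj.2).trans hi)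

theorem correctUpTo_of_eval_v
    (h : ∀ i ∈ Set.Icc 1 E.n, I.sym (E.v i) [] = (app σ (E.args i)).eval I) :
    E.CorrectUpTo I E.n := by
  refine E.correctUpTo_of_forall_lt fun i hi hlt => ?_
  obtain ⟨hm₁, hmi⟩ := E.firstMatch_key_mem_Icc I hi.1
  have hm : E.firstMatch I (E.key I i) ∈ Set.Icc 1 E.n := ⟨hm₁, hmi.trans hi.2⟩
  rw [E.eval_V_one I hi.1, h _ hm, E.eval_app_args hm fun j hj => hlt j (hj.trans_le hmi),
    E.key_firstMatch_key I hi.1, E.eval_app_args hi hlt]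

theorem correctUpTo_of_sym_key
    (h : ∀ i ∈ Set.Icc 1 E.n,
      I.sym σ (E.key I i) = I.sym (E.v (E.firstMatch I (E.key I i))) []) :
    E.CorrectUpTo I E.n :=
  E.correctUpTo_of_forall_lt fun i hi hlt => by
    rw [E.eval_V_one I hi.1, E.eval_app_args hi hlt, h i hi]

open Classical in
theorem exists_correctUpTo_eval_eq (I : Interp Fn Pr D) :
    ∃ J : Interp Fn Pr D, E.CorrectUpTo J E.n ∧ G.eval J = G.eval I := by
  obtain ⟨J, hJ⟩ := Interp.exists_sym_eq
    (fun τ xs => if h : ∃ i ∈ Set.Icc 1 E.n, E.v i = τ then (app σ (E.args h.choose)).eval I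
      else I.sym τ xs) fun τ xs => by
        split_ifs with h
        · obtain ⟨-, hτ⟩ := h.choose_spec
          rw [eval_app, Interp.isLeft_sym, ← E.isLeft_v h.choose, hτ]
        · exact I.isLeft_sym τ xs
  have hv (i : ℕ) (hi : i ∈ Set.Icc 1 E.n) : J.sym (E.v i) [] = (app σ (E.args i)).eval I := by
    have h : ∃ j ∈ Set.Icc 1 E.n, E.v j = E.v i := ⟨i, hi, rfl⟩
    rw [hJ, dif_pos h, E.v_injOn h.choose_spec.1 hi h.choose_spec.2]
  have heval (e : EufExpr Fn Pr) (he : SubExpr e G) : e.eval J = e.eval I := by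
    refine eval_eq_of_occurs e fun τ hτ => ?_
    have hτv : ¬ ∃ i ∈ Set.Icc 1 E.n, E.v i = τ := by
      rintro ⟨i, hi, rfl⟩
      exact E.not_occurs_v i hi (hτ.mono he)
    funext xs
    rw [hJ, dif_neg hτv]
  exact ⟨J, E.correctUpTo_of_eval_v fun i hi => by rw [hv i hi, heval _ (E.subExpr_app i hi)],
    heval G .refl⟩

open Classical in
theorem exists_correctUpTo_eval_result_eq (J : Interp Fn Pr D) :
    ∃ I : Interp Fn Pr D, E.CorrectUpTo I E.n ∧
      (E.step E.n G).eval I = (E.step E.n G).eval J := by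
  obtain ⟨I, hI⟩ := Interp.exists_sym_eq
    (fun τ xs => if τ = σ then J.sym (E.v (E.firstMatch J xs)) [] else J.sym τ xs) fun τ xs => by
      split_ifs with h
      · rw [Interp.isLeft_sym, E.isLeft_v, h]
      · exact J.isLeft_sym τ xs
  have hsym {τ : Fn ⊕ Pr} (hτ : τ ≠ σ) : I.sym τ = J.sym τ := by
    funext xs
    rw [hI, if_neg hτ]
  have heval {e : EufExpr Fn Pr} (he : ¬ Occurs σ e) : e.eval I = e.eval J :=
    eval_eq_of_occurs e fun τ hτ => hsym fun h => he (h ▸ hτ)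
  have hkey (i : ℕ) (hi : i ∈ Set.Icc 1 E.n) : E.key I i = E.key J i :=
    List.map_congr_left fun T hT => Sum.inl_injective (heval (E.not_occurs_hatArgs hi hT))
  refine ⟨I, E.correctUpTo_of_sym_key fun i hi => ?_, heval E.not_occurs_result⟩
  have hm := E.firstMatch_key_mem_Icc J hi.1
  rw [E.firstMatch_key_congr hi.1 fun j hj => hkey j ⟨hj.1, hj.2.trans hi.2⟩,
    hsym (E.v_ne ⟨hm.1, hm.2.trans hi.2⟩), hI, if_pos rfl, hkey i hi]

theorem forall_eval_iff (b : D ⊕ Bool) :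
    (∀ I : Interp Fn Pr D, (E.step E.n G).eval I = b) ↔ ∀ I : Interp Fn Pr D, G.eval I = b := by
  constructor
  · intro h I
    obtain ⟨J, hJ, hGJ⟩ := E.exists_correctUpTo_eval_eq I
    rw [← hGJ, ← hJ.eval_step le_rfl, h J]
  · intro h J
    obtain ⟨I, hI, hIJ⟩ := E.exists_correctUpTo_eval_result_eq J
    rw [← hIJ, hI.eval_step le_rfl, h I]

end Elimination

/-! ### The nested-ITE construction -/

theorem evalF_Cform (I : Interp Fn Pr D) (hatS : ℕ → ℕ → EufTerm Fn Pr) (k i j : ℕ) :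
    evalF I (Cform hatS k i j) = true ↔
      ((List.range' 1 k).map (hatS j)).map (evalT I) =
        ((List.range' 1 k).map (hatS i)).map (evalT I) := by
  rw [Cform]
  induction List.range' 1 k with
  | nil => simp [evalF]
  | cons l ls ih =>
    simp only [List.map_cons, List.foldr_cons, evalF, Bool.and_eq_true, decide_eq_true_eq, ih,
      List.cons.injEq, eq_comm (a := evalT I (hatS i l))]

theorem occurs_Cform {τ : Fn ⊕ Pr} {hatS : ℕ → ℕ → EufTerm Fn Pr} {k i j : ℕ}
    (h : Occurs τ (.f (Cform hatS k i j))) :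
    (∃ T ∈ (List.range' 1 k).map (hatS i), Occurs τ (.t T)) ∨
      ∃ T ∈ (List.range' 1 k).map (hatS j), Occurs τ (.t T) := by
  rw [Cform] at h
  generalize List.range' 1 k = ls at h ⊢
  induction ls with
  | nil => simp [occurs_iff (.f .tt), head, children] at h
  | cons l ls ih =>
    simp only [List.map_cons, List.foldr_cons, occurs_iff (.f (.and _ _)),
      occurs_iff (.f (.eq _ _)), head, children, reduceCtorEq, List.mem_cons, List.not_mem_nil,
      or_false, false_or, exists_eq_or_imp, exists_eq_left] at h ⊢
    rcases h with (h | h) | h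
    · exact .inl (.inl h)
    · exact .inr (.inl h)
    · exact (ih h).imp .inr .inr

theorem Vterm_self (vf : ℕ → Fn) (hatS : ℕ → ℕ → EufTerm Fn Pr) (k i : ℕ) :
    Vterm vf hatS k i i = .app (vf i) [] := by
  rw [Vterm, dif_neg (lt_irrefl i)]

theorem Vterm_of_lt (vf : ℕ → Fn) (hatS : ℕ → ℕ → EufTerm Fn Pr) (k : ℕ) {i j : ℕ} (h : j < i) :
    Vterm vf hatS k i j =
      .ite (Cform hatS k i j) (.app (vf j) []) (Vterm vf hatS k i (j + 1)) := by
  rw [Vterm, dif_pos h]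

theorem Vform_self (vp : ℕ → Pr) (hatS : ℕ → ℕ → EufTerm Fn Pr) (k i : ℕ) :
    Vform vp hatS k i i = .papp (vp i) [] := by
  rw [Vform, dif_neg (lt_irrefl i)]

theorem Vform_of_lt (vp : ℕ → Pr) (hatS : ℕ → ℕ → EufTerm Fn Pr) (k : ℕ) {i j : ℕ} (h : j < i) :
    Vform vp hatS k i j =
      .or (.and (Cform hatS k i j) (.papp (vp j) []))
        (.and (.not (Cform hatS k i j)) (Vform vp hatS k i (j + 1))) := by
  rw [Vform, dif_pos h]

section

variable {G : EufFormula Fn Pr} {k n : ℕ} {S hatS : ℕ → ℕ → EufTerm Fn Pr}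

theorem ElimHyps.fordT_eq_appOrder {f : Fn} {Ts : ℕ → EufTerm Fn Pr} {vf : ℕ → Fn}
    (H : ElimHyps G f k n Ts S vf hatS) (T : EufTerm Fn Pr) :
    fordT n Ts T = appOrder (.inl f) (fun i => (List.range' 1 k).map (S i)) n (.t T) := by
  rw [fordT, appOrder]
  congr 1
  ext i
  refine and_assoc.symm.trans (and_congr_right fun hi => ?_)
  rw [H.ts_app i hi.1 hi.2]
  rfl

/-- The elimination of a function symbol. -/
noncomputable def ElimHyps.elimination {f : Fn} {Ts : ℕ → EufTerm Fn Pr} {vf : ℕ → Fn}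
    (H : ElimHyps G f k n Ts S vf hatS) : Elimination (.f G) (.inl f : Fn ⊕ Pr) where
  n := n
  args i := (List.range' 1 k).map (S i)
  hatArgs i := (List.range' 1 k).map (hatS i)
  v i := .inl (vf i)
  cond := Cform hatS k
  V i j := .t (Vterm vf hatS k i j)
  step i := EufExpr.map (stepT Ts vf hatS k i) (stepF Ts vf hatS k i)
  subExpr_app i hi := by
    have h := H.ts_occurs i hi.1 hi.2
    rwa [H.ts_app i hi.1 hi.2] at h
  exists_eq_args as has := by
    obtain ⟨i, hi₁, hin, h⟩ := H.ts_complete as has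
    rw [H.ts_app i hi₁ hin, EufTerm.app.injEq] at h
    exact ⟨i, ⟨hi₁, hin⟩, h.2⟩
  le_of_subExpr i hi j hj h := by
    have horder := H.ts_order i j hi.1 hi.2 hj.1 hj.2
    rw [H.ts_app i hi.1 hi.2, H.ts_app j hj.1 hj.2] at horder
    exact le_of_not_gt fun hji => (horder h hji.ne').not_gt hji
  not_occurs_v i hi := H.vf_fresh i hi.1 hi.2
  v_injOn i hi j hj h := H.vf_inj i j hi.1 hi.2 hj.1 hj.2 (Sum.inl_injective h)
  isLeft_v _ := rfl
  evalF_cond I := evalF_Cform I hatS k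
  occurs_cond := occurs_Cform
  V_self i := congrArg EufExpr.t (Vterm_self vf hatS k i)
  isConditional_V i j hji := by
    rw [Vterm_of_lt vf hatS k hji]
    exact isConditional_ite _ _ _
  step_zero e := by cases e <;> simp only [EufExpr.map, stepT, stepF]
  step_succ i hi := by
    refine ⟨_, isReplacement_substT _ _, fun e => ?_⟩
    rw [← H.ts_app (i + 1) i.succ_pos hi]
    cases e <;> rfl
  hatArgs_eq i hi := by
    rw [List.map_map, List.map_map]
    refine List.map_congr_left fun l hl => congrArg EufExpr.t ?_
    rw [List.mem_range'_1] at hl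
    rw [← H.fordT_eq_appOrder]
    exact H.hatS_spec i l hi.1 hi.2 hl.1 (by omega)

theorem PrElimHyps.pfordT_eq_appOrder {p : Pr} {Ps : ℕ → EufFormula Fn Pr} {vp : ℕ → Pr}
    (H : PrElimHyps G p k n Ps S vp hatS) (T : EufTerm Fn Pr) :
    pfordT n Ps T = appOrder (.inr p) (fun i => (List.range' 1 k).map (S i)) n (.t T) := by
  rw [pfordT, appOrder]
  congr 1
  ext i
  refine and_assoc.symm.trans (and_congr_right fun hi => ?_)
  rw [H.ps_app i hi.1 hi.2]
  rfl

/-- The elimination of a predicate symbol. -/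
noncomputable def PrElimHyps.elimination {p : Pr} {Ps : ℕ → EufFormula Fn Pr} {vp : ℕ → Pr}
    (H : PrElimHyps G p k n Ps S vp hatS) : Elimination (.f G) (.inr p : Fn ⊕ Pr) where
  n := n
  args i := (List.range' 1 k).map (S i)
  hatArgs i := (List.range' 1 k).map (hatS i)
  v i := .inr (vp i)
  cond := Cform hatS k
  V i j := .f (Vform vp hatS k i j)
  step i := EufExpr.map (pstepT Ps vp hatS k i) (pstepF Ps vp hatS k i)
  subExpr_app i hi := by
    have h := H.ps_occurs i hi.1 hi.2
    rwa [H.ps_app i hi.1 hi.2] at h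
  exists_eq_args as has := by
    obtain ⟨i, hi₁, hin, h⟩ := H.ps_complete as has
    rw [H.ps_app i hi₁ hin, EufFormula.papp.injEq] at h
    exact ⟨i, ⟨hi₁, hin⟩, h.2⟩
  le_of_subExpr i hi j hj h := by
    have horder := H.ps_order i j hi.1 hi.2 hj.1 hj.2
    rw [H.ps_app i hi.1 hi.2, H.ps_app j hj.1 hj.2] at horder
    exact le_of_not_gt fun hji => (horder h hji.ne').not_gt hji
  not_occurs_v i hi := H.vp_fresh i hi.1 hi.2
  v_injOn i hi j hj h := H.vp_inj i j hi.1 hi.2 hj.1 hj.2 (Sum.inr_injective h)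
  isLeft_v _ := rfl
  evalF_cond I := evalF_Cform I hatS k
  occurs_cond := occurs_Cform
  V_self i := congrArg EufExpr.f (Vform_self vp hatS k i)
  isConditional_V i j hji := by
    rw [Vform_of_lt vp hatS k hji]
    exact isConditional_or _ _ _
  step_zero e := by cases e <;> simp only [EufExpr.map, pstepT, pstepF]
  step_succ i hi := by
    refine ⟨_, isReplacement_fsubstF _ _, fun e => ?_⟩
    rw [← H.ps_app (i + 1) i.succ_pos hi]
    cases e <;> simp only [EufExpr.map, pstepT, pstepF, Uform]
  hatArgs_eq i hi := by
    rw [List.map_map, List.map_map]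
    refine List.map_congr_left fun l hl => congrArg EufExpr.t ?_
    rw [List.mem_range'_1] at hl
    rw [← H.pfordT_eq_appOrder]
    exact H.hatS_spec i l hi.1 hi.2 hl.1 (by omega)

end

theorem validOn_iff_forall_eval {F : EufFormula Fn Pr} :
    ValidOn F D ↔ ∀ I : Interp Fn Pr D, (EufExpr.f F).eval I = .inr true :=
  forall_congr' fun _ => Sum.inr_injective.eq_iff.symm

theorem ElimStep.validOn_iff {isP : Fn → Prop} {a b : EufFormula Fn Pr × Set Fn}
    (h : ElimStep isP a b) (D : Type) : ValidOn b.1 D ↔ ValidOn a.1 D := by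
  simp only [validOn_iff_forall_eval]
  cases h with
  | fnP H _ => exact H.elimination.forall_eval_iff _
  | fnG H _ => exact H.elimination.forall_eval_iff _
  | pr H => exact H.elimination.forall_eval_iff _

theorem euf_transform_theorem_general {isP : Fn → Prop} {a b : EufFormula Fn Pr × Set Fn}
    (h : Relation.ReflTransGen (ElimStep isP) a b) (D : Type) :
    ValidOn b.1 D ↔ ValidOn a.1 D := by
  induction h with
  | refl => rfl
  | tail _ hstep ih => exact (hstep.validOn_iff D).trans ih

/-- The formula `F*`, obtained from `F` by eliminating all applications of
function and predicate symbols of nonzero order via the nested-ITE construction, is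
universally valid iff `F` is universally valid. -/
theorem euf_transform_theorem {Fn Pr : Type} (isP : Fn → Prop)
    (F Fstar : EufFormula Fn Pr) (V : Set Fn) (h : ElimTo isP F Fstar V) :
    UniversallyValid Fstar ↔ UniversallyValid F := by
  exact forall₂_congr fun D _ => euf_transform_theorem_general h.1 D
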